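/- arXiv:1908.02193 — 2 statements merged into one kernel-verified Lean document; each statement's English description precedes it below -/
import Mathlib

section
/- Fix ρ ∈ (0,1) and α ∈ (0,1). Let (α_n) be a sequence in (0,1) with n·α_n → α, let c_n be defined by Φ(−c_n) = α_n, and for n ≥ 2 let z₀(n) be the unique real number with Φ(−d(ρ, c_n, z₀(n))) = 1/n. Then sup_{z ≤ z₀(n)} d(ρ,c_n,z)·G(ρ,c_n,z)²·φ(z) → 0 as n → ∞, where G(ρ,c,z) = (c + z/√ρ)/(2(1−ρ)^{3/2}). -/
open MeasureTheory Filter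

/-- The standard normal density. -/
noncomputable def phi (x : ℝ) : ℝ := (Real.sqrt (2 * Real.pi))⁻¹ * Real.exp (-x ^ 2 / 2)

/-- The standard normal cumulative distribution function. -/
noncomputable def Phi (x : ℝ) : ℝ := ∫ t in Set.Iic x, phi t

/-- d(ρ,c,z) = (c + √ρ·z)/√(1−ρ). -/
noncomputable def dd (ρ c z : ℝ) : ℝ := (c + Real.sqrt ρ * z) / Real.sqrt (1 - ρ)

/-- G(ρ,c,z) = (c + z/√ρ)/(2(1−ρ)^{3/2}). -/
noncomputable def G (ρ c z : ℝ) : ℝ :=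
  (c + z / Real.sqrt ρ) / (2 * (1 - ρ) ^ ((3 : ℝ) / 2))

/-- H_n(ρ,c) = ∫ Φ(d(ρ,c,z))^n φ(z) dz. -/
noncomputable def Hn (n : ℕ) (ρ c : ℝ) : ℝ := ∫ z : ℝ, (Phi (dd ρ c z)) ^ n * phi z

/-!
If `n * αₙ` is bounded, the Gaussian tails satisfy `Φ(-cₙ) = αₙ = O(1/n) = O(Φ(-d(ρ, cₙ, z₀ n)))`.
Since `Φ(-lam * x) = o(Φ(-x))` as `x → ∞` for every `lam > 1`, this forces
`d(ρ, cₙ, z₀ n) ≤ lam * cₙ` eventually. Taking `lam < 1 / √(1 - ρ)` gives `z₀ n ≤ -δ * cₙ` for some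
`δ > 0`, so that `z ≤ z₀ n` is far out in the left tail and `cₙ = O(|z|)` there. Hence `d * G² * φ`
is `O(|z|³ φ(z))`, which vanishes as `z → -∞`.
-/

open Asymptotics Topology

section Gaussian

lemma phi_eq_gaussianPDFReal : phi = ProbabilityTheory.gaussianPDFReal 0 1 := by
  ext x
  simp [phi, ProbabilityTheory.gaussianPDFReal]

lemma phi_pos (x : ℝ) : 0 < phi x := by
  rw [phi_eq_gaussianPDFReal]
  exact ProbabilityTheory.gaussianPDFReal_pos 0 1 x one_ne_zero

lemma integrable_phi : Integrable phi := by
  rw [phi_eq_gaussianPDFReal]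
  exact ProbabilityTheory.integrable_gaussianPDFReal 0 1

lemma phi_mul (a x : ℝ) : phi (a * x) = Real.exp (-((a ^ 2 - 1) / 2) * x ^ 2) * phi x := by
  rw [phi, phi, mul_left_comm, ← Real.exp_add]
  ring_nf

lemma tendsto_abs_pow_mul_phi_cocompact (k : ℕ) :
    Tendsto (fun z ↦ |z| ^ k * phi z) (cocompact ℝ) (𝓝 0) := by
  have h := (tendsto_rpow_abs_mul_exp_neg_mul_sq_cocompact one_half_pos k).const_mul
    (Real.sqrt (2 * Real.pi))⁻¹
  rw [mul_zero] at h
  refine h.congr fun z ↦ ?_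
  rw [Real.rpow_natCast, phi, mul_left_comm]
  ring_nf

lemma Phi_mono : Monotone Phi := fun _ _ hxy ↦
  setIntegral_mono_set integrable_phi.integrableOn (ae_of_all _ fun t ↦ (phi_pos t).le)
    (Set.Iic_subset_Iic.mpr hxy).eventuallyLE

lemma Phi_pos (x : ℝ) : 0 < Phi x := by
  have hsupport : Function.support phi = Set.univ :=
    Set.eq_univ_of_forall fun t ↦ (phi_pos t).ne'
  rw [Phi, setIntegral_pos_iff_support_of_nonneg_ae (ae_of_all _ fun t ↦ (phi_pos t).le)
    integrable_phi.integrableOn, hsupport]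
  simp

lemma Phi_mul_eq_integral {a : ℝ} (ha : 0 < a) (x : ℝ) :
    Phi (a * x) = a * ∫ t in Set.Iic x, phi (a * t) := by
  have h := Measure.setIntegral_comp_smul_of_pos volume phi (Set.Iic x) ha
  simp only [smul_eq_mul, Module.finrank_self, pow_one, LinearOrderedField.smul_Iic ha] at h
  rw [h, Phi, mul_inv_cancel_left₀ ha.ne']

lemma Phi_mul_le {a x : ℝ} (ha : 1 ≤ a) (hx : x ≤ 0) :
    Phi (a * x) ≤ a * Real.exp (-((a ^ 2 - 1) / 2) * x ^ 2) * Phi x := by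
  have ha₀ : 0 < a := one_pos.trans_le ha
  have hexp : ∀ t ≤ x, phi (a * t) ≤ Real.exp (-((a ^ 2 - 1) / 2) * x ^ 2) * phi t := by
    intro t ht
    have hcoeff : -((a ^ 2 - 1) / 2) ≤ 0 := by nlinarith
    have hsq : x ^ 2 ≤ t ^ 2 := by nlinarith
    rw [phi_mul]
    exact mul_le_mul_of_nonneg_right
      (Real.exp_le_exp.mpr (mul_le_mul_of_nonpos_left hsq hcoeff)) (phi_pos t).le
  calc Phi (a * x) = a * ∫ t in Set.Iic x, phi (a * t) := Phi_mul_eq_integral ha₀ x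
    _ ≤ a * ∫ t in Set.Iic x, Real.exp (-((a ^ 2 - 1) / 2) * x ^ 2) * phi t := by
      refine mul_le_mul_of_nonneg_left ?_ ha₀.le
      exact setIntegral_mono_on (integrable_phi.comp_mul_left' ha₀.ne').integrableOn
        (integrable_phi.const_mul _).integrableOn measurableSet_Iic hexp
    _ = a * Real.exp (-((a ^ 2 - 1) / 2) * x ^ 2) * Phi x := by
      rw [integral_const_mul, Phi, mul_assoc]

lemma isLittleO_Phi_mul_atBot {a : ℝ} (ha : 1 < a) : (fun x ↦ Phi (a * x)) =o[atBot] Phi := by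
  have hbound : (fun x ↦ Phi (a * x)) =O[atBot]
      fun x ↦ a * Real.exp (-((a ^ 2 - 1) / 2) * x ^ 2) * Phi x := by
    refine .of_norm_eventuallyLE ?_
    filter_upwards [eventually_le_atBot 0] with x hx
    rw [Real.norm_of_nonneg (Phi_pos _).le]
    exact Phi_mul_le ha.le hx
  have hfactor : (fun x : ℝ ↦ a * Real.exp (-((a ^ 2 - 1) / 2) * x ^ 2)) =o[atBot]
      fun _ ↦ (1 : ℝ) := by
    have hcoeff : 0 < (a ^ 2 - 1) / 2 := by nlinarith
    refine (isLittleO_one_iff ℝ).mpr ?_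
    simpa using ((tendsto_rpow_abs_mul_exp_neg_mul_sq_cocompact hcoeff 0).mono_left
      atBot_le_cocompact).const_mul a
  simpa using hbound.trans_isLittleO (hfactor.mul_isBigO (isBigO_refl Phi atBot))

end Gaussian

section Quantiles

variable {ι : Type*} {l : Filter ι} {x y : ι → ℝ}

lemma tendsto_atBot_of_tendsto_Phi (h : Tendsto (fun i ↦ Phi (x i)) l (𝓝 0)) :
    Tendsto x l atBot :=
  tendsto_atBot.mpr fun m ↦
    (h.eventually_lt_const (Phi_pos m)).mono fun _ hi ↦ (Phi_mono.reflect_lt hi).le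

lemma eventually_mul_lt_of_isBigO_Phi (hx : Tendsto x l atBot)
    (hxy : (fun i ↦ Phi (x i)) =O[l] fun i ↦ Phi (y i)) {a : ℝ} (ha : 1 < a) :
    ∀ᶠ i in l, a * x i < y i := by
  have hlittle : (fun i ↦ Phi (a * x i)) =o[l] fun i ↦ Phi (y i) :=
    ((isLittleO_Phi_mul_atBot ha).comp_tendsto hx).trans_isBigO hxy
  filter_upwards [hlittle.eventuallyLT_norm_of_eventually_pos
    (Eventually.of_forall fun i ↦ norm_pos_iff.mpr (Phi_pos (y i)).ne')] with i hi
  rw [Real.norm_of_nonneg (Phi_pos _).le, Real.norm_of_nonneg (Phi_pos _).le] at hi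
  exact Phi_mono.reflect_lt hi

end Quantiles

section Bounds

lemma abs_add_mul_le {c z M : ℝ} (hc : |c| ≤ M * |z|) (a : ℝ) :
    |c + a * z| ≤ (M + |a|) * |z| :=
  calc |c + a * z| ≤ |c| + |a * z| := abs_add_le _ _
    _ ≤ M * |z| + |a| * |z| := by rw [abs_mul]; gcongr
    _ = (M + |a|) * |z| := by ring

lemma abs_dd_le {c z M : ℝ} (hc : |c| ≤ M * |z|) (ρ : ℝ) :
    |dd ρ c z| ≤ (M + |Real.sqrt ρ|) / |Real.sqrt (1 - ρ)| * |z| := by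
  rw [dd, abs_div, div_mul_eq_mul_div]
  gcongr
  exact abs_add_mul_le hc _

lemma abs_G_le {c z M : ℝ} (hc : |c| ≤ M * |z|) (ρ : ℝ) :
    |G ρ c z| ≤ (M + |(Real.sqrt ρ)⁻¹|) / |2 * (1 - ρ) ^ ((3 : ℝ) / 2)| * |z| := by
  rw [G, abs_div, div_mul_eq_mul_div, div_eq_inv_mul z]
  gcongr
  exact abs_add_mul_le hc _

lemma exists_abs_dd_mul_G_sq_mul_phi_le (ρ M : ℝ) :
    ∃ K : ℝ, ∀ c z : ℝ, |c| ≤ M * |z| →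
      |dd ρ c z * G ρ c z ^ 2 * phi z| ≤ K * (|z| ^ 3 * phi z) := by
  refine ⟨(M + |Real.sqrt ρ|) / |Real.sqrt (1 - ρ)| *
    ((M + |(Real.sqrt ρ)⁻¹|) / |2 * (1 - ρ) ^ ((3 : ℝ) / 2)|) ^ 2, fun c z hc ↦ ?_⟩
  have hφ := (phi_pos z).le
  rw [abs_mul, abs_mul, abs_pow, abs_of_nonneg hφ]
  calc |dd ρ c z| * |G ρ c z| ^ 2 * phi z
      ≤ ((M + |Real.sqrt ρ|) / |Real.sqrt (1 - ρ)| * |z|) *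
          ((M + |(Real.sqrt ρ)⁻¹|) / |2 * (1 - ρ) ^ ((3 : ℝ) / 2)| * |z|) ^ 2 * phi z :=
        mul_le_mul_of_nonneg_right (mul_le_mul (abs_dd_le hc ρ)
          (pow_le_pow_left₀ (abs_nonneg _) (abs_G_le hc ρ) 2) (sq_nonneg _)
          ((abs_nonneg _).trans (abs_dd_le hc ρ))) hφ
    _ = _ := by ring

lemma le_neg_mul_of_dd_le {ρ a c z : ℝ} (hρ : ρ ∈ Set.Ioo (0 : ℝ) 1) (h : dd ρ c z ≤ a * c) :
    z ≤ -((1 - a * Real.sqrt (1 - ρ)) / Real.sqrt ρ * c) := by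
  have hsqrt : 0 < Real.sqrt ρ := Real.sqrt_pos.mpr hρ.1
  have hsqrt' : 0 < Real.sqrt (1 - ρ) := Real.sqrt_pos.mpr (sub_pos.mpr hρ.2)
  rw [dd, div_le_iff₀ hsqrt'] at h
  rw [div_mul_eq_mul_div, ← neg_div, le_div_iff₀ hsqrt]
  linarith

end Bounds

section Limits

variable {ι : Type*} {l : Filter ι}

lemma tendsto_sSup_image_Iic_zero {β : Type*} [Preorder β] [IsCodirectedOrder β]
    {f : ι → β → ℝ} {g : β → ℝ} {b : ι → β}
    (hb : Tendsto b l atBot) (hg : Tendsto g atBot (𝓝 0))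
    (hfg : ∀ᶠ i in l, ∀ z ≤ b i, |f i z| ≤ g z) :
    Tendsto (fun i ↦ sSup (f i '' Set.Iic (b i))) l (𝓝 0) := by
  refine Metric.nhds_basis_closedBall.tendsto_right_iff.mpr fun ε hε ↦ ?_
  have hgε : ∀ᶠ i in l, ∀ z ≤ b i, g z ≤ ε :=
    hb.eventually (eventually_forall_le_atBot.mpr (hg.eventually_le_const hε))
  filter_upwards [hfg, hgε] with i hfi hgi
  have hsub : f i '' Set.Iic (b i) ⊆ Metric.closedBall 0 ε := by
    rintro _ ⟨z, hz, rfl⟩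
    simpa using (hfi z hz).trans (hgi z hz)
  exact closure_minimal hsub Metric.isClosed_closedBall
    (csSup_mem_closure (Set.nonempty_Iic.image _)
      (Metric.isBounded_closedBall.subset hsub).bddAbove)

lemma tendsto_sSup_dd_mul_G_sq_mul_phi (ρ : ℝ) {c z₀ : ι → ℝ} {δ : ℝ} (hδ : 0 < δ)
    (hc : Tendsto c l atTop) (hz₀ : ∀ᶠ i in l, z₀ i ≤ -(δ * c i)) :
    Tendsto (fun i ↦ sSup ((fun z ↦ dd ρ (c i) z * G ρ (c i) z ^ 2 * phi z) '' Set.Iic (z₀ i)))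
      l (𝓝 0) := by
  obtain ⟨K, hK⟩ := exists_abs_dd_mul_G_sq_mul_phi_le ρ δ⁻¹
  have hz₀_atBot : Tendsto z₀ l atBot :=
    tendsto_atBot_mono' l hz₀ (tendsto_neg_atTop_atBot.comp (hc.const_mul_atTop hδ))
  have hdominating : Tendsto (fun z ↦ K * (|z| ^ 3 * phi z)) atBot (𝓝 0) := by
    simpa using ((tendsto_abs_pow_mul_phi_cocompact 3).mono_left atBot_le_cocompact).const_mul K
  refine tendsto_sSup_image_Iic_zero hz₀_atBot hdominating ?_
  filter_upwards [hz₀, hc.eventually_ge_atTop 0] with i hi hci z hz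
  refine hK (c i) z ?_
  rw [abs_of_nonneg hci, le_inv_mul_iff₀ hδ]
  linarith [neg_le_abs z]

theorem sup_dG2phi_tendsto_zero_general {ρ : ℝ} (hρ : ρ ∈ Set.Ioo (0 : ℝ) 1) {p q c z₀ : ι → ℝ}
    (hp : Tendsto p l (𝓝 0)) (hpq : p =O[l] q) (hc : ∀ᶠ i in l, Phi (-(c i)) = p i)
    (hz₀ : ∀ᶠ i in l, Phi (-(dd ρ (c i) (z₀ i))) = q i) :
    Tendsto (fun i ↦ sSup ((fun z ↦ dd ρ (c i) z * G ρ (c i) z ^ 2 * phi z) '' Set.Iic (z₀ i)))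
      l (𝓝 0) := by
  have hneg : Tendsto (fun i ↦ -(c i)) l atBot :=
    tendsto_atBot_of_tendsto_Phi (hp.congr' (EventuallyEq.symm hc))
  have hsqrt : 0 < Real.sqrt (1 - ρ) := Real.sqrt_pos.mpr (sub_pos.mpr hρ.2)
  have hsqrt_lt : Real.sqrt (1 - ρ) < 1 := by
    rw [Real.sqrt_lt' one_pos]
    linarith [hρ.1]
  obtain ⟨a, ha, ha'⟩ : ∃ a, 1 < a ∧ a < (Real.sqrt (1 - ρ))⁻¹ :=
    exists_between ((one_lt_inv₀ hsqrt).mpr hsqrt_lt)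
  have hδ : 0 < (1 - a * Real.sqrt (1 - ρ)) / Real.sqrt ρ :=
    div_pos (sub_pos.mpr ((lt_inv_mul_iff₀' hsqrt).mp (by simpa using ha')))
      (Real.sqrt_pos.mpr hρ.1)
  refine tendsto_sSup_dd_mul_G_sq_mul_phi ρ hδ (tendsto_neg_atBot_iff.mp hneg) ?_
  filter_upwards [eventually_mul_lt_of_isBigO_Phi hneg
    (hpq.congr' (EventuallyEq.symm hc) (EventuallyEq.symm hz₀)) ha] with i hi
  exact le_neg_mul_of_dd_le hρ (by linarith)

end Limits

lemma isBigO_one_div_natCast_of_tendsto {u : ℕ → ℝ} {L : ℝ}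
    (h : Tendsto (fun n : ℕ ↦ (n : ℝ) * u n) atTop (𝓝 L)) :
    u =O[atTop] fun n : ℕ ↦ 1 / (n : ℝ) := by
  have hprod := (isBigO_refl (fun n : ℕ ↦ 1 / (n : ℝ)) atTop).mul (h.isBigO_one ℝ)
  refine hprod.congr' ?_ (by simp)
  filter_upwards [eventually_ne_atTop 0] with n hn
  field_simp

theorem sup_dG2phi_tendsto_zero
    (ρ : ℝ) (hρ : ρ ∈ Set.Ioo (0:ℝ) 1) (α : ℝ) (hα : α ∈ Set.Ioo (0:ℝ) 1)
    (αseq : ℕ → ℝ) (hαseq : ∀ n, αseq n ∈ Set.Ioo (0:ℝ) 1)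
    (hlim : Tendsto (fun n : ℕ => (n : ℝ) * αseq n) atTop (nhds α))
    (c : ℕ → ℝ) (hc : ∀ n, Phi (-(c n)) = αseq n)
    (z₀ : ℕ → ℝ) (hz₀ : ∀ n : ℕ, 2 ≤ n → Phi (-(dd ρ (c n) (z₀ n))) = 1 / n) :
    Tendsto (fun n : ℕ =>
        sSup ((fun z : ℝ => dd ρ (c n) z * (G ρ (c n) z) ^ 2 * phi z) '' Set.Iic (z₀ n)))
      atTop (nhds 0) := by
  have hO := isBigO_one_div_natCast_of_tendsto hlim
  exact sup_dG2phi_tendsto_zero_general hρ (hO.trans_tendsto tendsto_one_div_atTop_nhds_zero_nat) hO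
    (Eventually.of_forall hc) ((eventually_ge_atTop 2).mono hz₀)
end

section
/- There exists a constant C > 0 such that for every integer n ≥ 2, ∫_0^1 |n·(n·t − 1)·(1−t)^{n−2}| dt ≤ C. -/
/-! The weight `n (n t - 1) (1 - t) ^ (n - 2)` is the derivative of `-n t (1 - t) ^ (n - 1)`, which
vanishes at both ends of `[0, 1]` and decreases up to `t = 1 / n`, then increases. Hence the
integral is the total variation of this function, `2 (1 - 1 / n) ^ (n - 1)`, and `C = 2` works. -/

open MeasureTheory Set

lemma integral_abs_of_hasDerivAt_of_nonneg_of_nonpos {F f : ℝ → ℝ} {a b c : ℝ}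
    (hac : a ≤ c) (hcb : c ≤ b) (hcont : ContinuousOn F (Icc a b))
    (hleft : ∀ x ∈ Ioo a c, HasDerivAt F (f x) x) (hright : ∀ x ∈ Ioo c b, HasDerivAt F (f x) x)
    (hnonneg : ∀ x ∈ Ioo a c, 0 ≤ f x) (hnonpos : ∀ x ∈ Ioo c b, f x ≤ 0) :
    ∫ x in a..b, |f x| = 2 * F c - F a - F b := by
  have hcont_left : ContinuousOn F (Icc a c) := hcont.mono (Icc_subset_Icc_right hcb)
  have hcont_right : ContinuousOn F (Icc c b) := hcont.mono (Icc_subset_Icc_left hac)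
  have hint_left : IntervalIntegrable f volume a c :=
    (intervalIntegrable_iff_integrableOn_Ioc_of_le hac).2
      (intervalIntegral.integrableOn_deriv_of_nonneg hcont_left hleft hnonneg)
  have hint_right : IntervalIntegrable (fun x ↦ -f x) volume c b :=
    (intervalIntegrable_iff_integrableOn_Ioc_of_le hcb).2
      (intervalIntegral.integrableOn_deriv_of_nonneg hcont_right.neg
        (fun x hx ↦ (hright x hx).neg) fun x hx ↦ neg_nonneg.2 (hnonpos x hx))
  calc ∫ x in a..b, |f x|
      = (∫ x in a..c, |f x|) + ∫ x in c..b, |f x| :=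
        (intervalIntegral.integral_add_adjacent_intervals hint_left.abs
          (by simpa only [abs_neg] using hint_right.abs)).symm
    _ = (∫ x in a..c, f x) + ∫ x in c..b, -f x := by
        congr 1
        · exact intervalIntegral.integral_congr_Ioo_of_le hac
            fun x hx ↦ abs_of_nonneg (hnonneg x hx)
        · exact intervalIntegral.integral_congr_Ioo_of_le hcb
            fun x hx ↦ abs_of_nonpos (hnonpos x hx)
    _ = (F c - F a) + (-F b - -F c) := by
        rw [intervalIntegral.integral_eq_sub_of_hasDerivAt_of_le hac hcont_left hleft hint_left,
          intervalIntegral.integral_eq_sub_of_hasDerivAt_of_le hcb hcont_right.fun_neg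
            (fun x hx ↦ (hright x hx).fun_neg) hint_right]
    _ = 2 * F c - F a - F b := by ring

lemma hasDerivAt_mul_one_sub_pow {𝕜 : Type*} [NontriviallyNormedField 𝕜] (m : ℕ) (t : 𝕜) :
    HasDerivAt (fun t : 𝕜 ↦ t * (1 - t) ^ (m + 1)) ((1 - (m + 2) * t) * (1 - t) ^ m) t := by
  have h := (hasDerivAt_id' t).fun_mul (((hasDerivAt_id' t).const_sub 1).fun_pow (m + 1))
  refine h.congr_deriv ?_
  push_cast [Nat.add_sub_cancel]
  ring

lemma integral_abs_one_sub_mul_mul_one_sub_pow (m : ℕ) :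
    ∫ t in (0 : ℝ)..1, |(1 - (m + 2) * t) * (1 - t) ^ m| =
      2 * ((1 / (m + 2)) * (1 - 1 / (m + 2)) ^ (m + 1)) := by
  have hm : (0 : ℝ) < m + 2 := by positivity
  have hcrit : (1 : ℝ) / (m + 2) ≤ 1 := by
    rw [div_le_one hm]
    linarith
  rw [integral_abs_of_hasDerivAt_of_nonneg_of_nonpos (c := 1 / (m + 2)) (by positivity) hcrit
    (by fun_prop) (fun t _ ↦ hasDerivAt_mul_one_sub_pow m t)
    fun t _ ↦ hasDerivAt_mul_one_sub_pow m t]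
  · simp
  · intro t ht
    have hsign : (m + 2) * t ≤ 1 := (le_div_iff₀' hm).1 ht.2.le
    exact mul_nonneg (sub_nonneg.2 hsign) (pow_nonneg (by linarith [ht.2]) m)
  · intro t ht
    have hsign : 1 ≤ (m + 2) * t := (div_le_iff₀' hm).1 ht.1.le
    exact mul_nonpos_of_nonpos_of_nonneg (sub_nonpos.2 hsign) (pow_nonneg (by linarith [ht.2]) m)

lemma integral_abs_mul_mul_sub_one_mul_one_sub_pow {n : ℕ} (hn : 2 ≤ n) :
    ∫ t in (0 : ℝ)..1, |(n : ℝ) * ((n : ℝ) * t - 1) * (1 - t) ^ (n - 2)| =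
      2 * (1 - 1 / (n : ℝ)) ^ (n - 1) := by
  obtain ⟨m, rfl⟩ := Nat.exists_eq_add_of_le' hn
  have hfactor (t : ℝ) : |((m + 2 : ℕ) : ℝ) * ((m + 2 : ℕ) * t - 1) * (1 - t) ^ m| =
      (m + 2) * |(1 - (m + 2) * t) * (1 - t) ^ m| := by
    push_cast
    rw [mul_assoc, abs_mul, abs_of_nonneg (by positivity), abs_mul, abs_sub_comm, ← abs_mul]
  simp only [Nat.add_sub_cancel, hfactor, intervalIntegral.integral_const_mul,
    integral_abs_one_sub_mul_mul_one_sub_pow]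
  push_cast
  field_simp

theorem integral_abs_fn_bounded :
    ∃ C > 0, ∀ n : ℕ, 2 ≤ n →
      (∫ t in (0:ℝ)..1, |(n : ℝ) * ((n : ℝ) * t - 1) * (1 - t) ^ (n - 2)|) ≤ C := by
  refine ⟨2, two_pos, fun n hn ↦ ?_⟩
  rw [integral_abs_mul_mul_sub_one_mul_one_sub_pow hn]
  exact mul_le_of_le_one_right zero_le_two
    (pow_le_one₀ (Nat.one_sub_one_div_cast_nonneg n) (Nat.one_sub_one_div_cast_le_one n))
end
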